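/- Let T > 0 and let c ∈ [0,T]. Define y : [0,T] → ℝ by y(t) = (max(c² − t², 0))². Then y is a solution of the integral equation y(t) = ∫_t^T 4s·√(y(s)) ds for all t ∈ [0,T]; equivalently, for all t ∈ [0,T], ∫_t^T 4s·max(c² − s², 0) ds = (max(c² − t², 0))². -/

import Mathlib

/-!
For `n ≥ 2` the truncated power `x ↦ (max x 0) ^ n` is differentiable even at its kink, so the
fundamental theorem of calculus applies to `s ↦ (max (c² - s²) 0)²` on the whole line, with no
splitting of the integral at `c`. The boundary term at `T` vanishes because `c² ≤ T²`.
-/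

theorem hasDerivAt_max_zero_pow {n : ℕ} (hn : 1 < n) (x : ℝ) :
    HasDerivAt (fun x : ℝ => max x 0 ^ n) (n * max x 0 ^ (n - 1)) x := by
  have hn0 : n ≠ 0 := by lia
  have hn1 : n - 1 ≠ 0 := by lia
  refine hasDerivAt_of_hasDerivAt_of_ne' (x := 0) (g := fun x : ℝ => n * max x 0 ^ (n - 1))
    (fun x hx => ?_) (by fun_prop) (by fun_prop) x
  rcases hx.lt_or_gt with hneg | hpos
  · have heq : (fun x : ℝ => max x 0 ^ n) =ᶠ[nhds x] fun _ => 0 := by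
      filter_upwards [Iio_mem_nhds hneg] with z hz
      rw [max_eq_right hz.le, zero_pow hn0]
    simpa only [max_eq_right hneg.le, zero_pow hn1, mul_zero] using
      (hasDerivAt_const x (0 : ℝ)).congr_of_eventuallyEq heq
  · have heq : (fun x : ℝ => max x 0 ^ n) =ᶠ[nhds x] fun z => z ^ n := by
      filter_upwards [Ioi_mem_nhds hpos] with z hz
      rw [max_eq_left hz.le]
    simpa only [max_eq_left hpos.le] using (hasDerivAt_pow n x).congr_of_eventuallyEq heq

theorem integral_max_zero_pow_mul_deriv {f f' : ℝ → ℝ} {a b : ℝ} {n : ℕ} (hn : 1 < n)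
    (hf : ∀ x ∈ Set.uIcc a b, HasDerivAt f (f' x) x)
    (hf' : IntervalIntegrable f' MeasureTheory.volume a b) :
    ∫ x in a..b, n * max (f x) 0 ^ (n - 1) * f' x = max (f b) 0 ^ n - max (f a) 0 ^ n := by
  have hcont : ContinuousOn (fun x => n * max (f x) 0 ^ (n - 1)) (Set.uIcc a b) :=
    continuousOn_const.mul (((HasDerivAt.continuousOn hf).sup continuousOn_const).pow (n - 1))
  exact intervalIntegral.integral_eq_sub_of_hasDerivAt
    (fun x hx => (hasDerivAt_max_zero_pow hn (f x)).comp x (hf x hx))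
    (hf'.continuousOn_mul hcont)

theorem integral_four_mul_mul_max_sub_sq_zero (a t T : ℝ) :
    ∫ s in t..T, 4 * s * max (a - s ^ 2) 0 = max (a - t ^ 2) 0 ^ 2 - max (a - T ^ 2) 0 ^ 2 := by
  have hderiv (s : ℝ) : HasDerivAt (fun s : ℝ => a - s ^ 2) (-(2 * s)) s := by
    simpa using (hasDerivAt_pow 2 s).const_sub a
  have hint : IntervalIntegrable (fun s : ℝ => -(2 * s)) MeasureTheory.volume t T :=
    Continuous.intervalIntegrable (by fun_prop) t T
  calc ∫ s in t..T, 4 * s * max (a - s ^ 2) 0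
      = ∫ s in t..T, -((2 : ℕ) * max (a - s ^ 2) 0 ^ (2 - 1) * -(2 * s)) := by
        congr 1 with s
        norm_num
        ring
    _ = -(max (a - T ^ 2) 0 ^ 2 - max (a - t ^ 2) 0 ^ 2) := by
        rw [intervalIntegral.integral_neg,
          integral_max_zero_pow_mul_deriv one_lt_two (fun s _ => hderiv s) hint]
    _ = max (a - t ^ 2) 0 ^ 2 - max (a - T ^ 2) 0 ^ 2 := neg_sub _ _

theorem stmt11_general (T c : ℝ) (hc : |c| ≤ |T|)
    (y : ℝ → ℝ) (hy : ∀ t, y t = (max (c ^ 2 - t ^ 2) 0) ^ 2) (t : ℝ) :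
    y t = ∫ s in t..T, 4 * s * Real.sqrt (y s) := by
  have hsqrt (s : ℝ) : Real.sqrt (y s) = max (c ^ 2 - s ^ 2) 0 := by
    rw [hy, Real.sqrt_sq (le_max_right _ _)]
  have hT : max (c ^ 2 - T ^ 2) 0 = 0 := max_eq_right (sub_nonpos.2 (sq_le_sq.2 hc))
  simp only [hsqrt]
  rw [integral_four_mul_mul_max_sub_sq_zero, hT, hy]
  ring

theorem stmt11 (T : ℝ) (hT : 0 < T) (c : ℝ) (hc : c ∈ Set.Icc 0 T)
    (y : ℝ → ℝ) (hy : ∀ t, y t = (max (c ^ 2 - t ^ 2) 0) ^ 2) :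
    ∀ t ∈ Set.Icc 0 T,
      y t = ∫ s in t..T, 4 * s * Real.sqrt (y s) :=
  fun t _ => stmt11_general T c (abs_le_abs_of_nonneg hc.1 hc.2) y hy t
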